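/- Suppose I is a maximal ideal on ℕ (a proper ideal such that for every A ⊆ ℕ either A ∈ I or ℕ∖A ∈ I), (τ, d_τ) is a condition of ℙ(I), and D_n ⊆ ℙ(I) is dense for each n ∈ ℕ. Then there exist a condition (σ, d_σ) with σ ≤ τ, for each j ∈ ℕ a map ⃗g_j assigning to each ℓ ∈ d_σ⁻¹({j}) a function ⃗g_j(ℓ) : [0, j) → 2, and finite sets W_j of conditions, such that for every j: (1) W_{2j} ∪ W_{2j+1} ⊆ D_j; (2) |W_{2j}| ≤ 2^((j−1)·2j) (exponent read as 0 when j = 0) and |W_{2j+1}| ≤ 2^(j·(2j−1)); (3) W_{2j} ∪ W_{2j+1} is predense below the amalgamation σ[⋃_{i≤j} ⃗g_{2i}] and also below σ[⋃_{i<j} ⃗g_{2i+1}] (these finite amalgamations, taken with S the corresponding finite set of even/odd indices, are conditions of ℙ(I)); and furthermore either σ[⋃_{i∈ℕ} ⃗g_{2i}] is a condition of ℙ(I) with σ[⋃_{i∈ℕ} ⃗g_{2i}] ≤ τ, or σ[⋃_{i∈ℕ} ⃗g_{2i+1}] is a condition of ℙ(I) with σ[⋃_{i∈ℕ} ⃗g_{2i+1}]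 ≤ τ. -/

import Mathlib

/-- A condition is a pair `(σ, d)` with `σ : ℕ → ℕ → Bool` and `d : ℕ → ℕ`. -/
abbrev Cond : Type := (ℕ → ℕ → Bool) × (ℕ → ℕ)

/-- `I` is an ideal on ℕ: contains `∅`, closed under subsets and finite unions. -/
def IsIdeal (I : Set (Set ℕ)) : Prop :=
  ∅ ∈ I ∧ (∀ A B : Set ℕ, A ⊆ B → B ∈ I → A ∈ I) ∧
    (∀ A B : Set ℕ, A ∈ I → B ∈ I → A ∪ B ∈ I)

/-- `I` is a maximal (proper) ideal on ℕ. -/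
def IsMaximalIdeal (I : Set (Set ℕ)) : Prop :=
  IsIdeal I ∧ Set.univ ∉ I ∧ ∀ A : Set ℕ, A ∈ I ∨ (Set.univ \ A) ∈ I

/-- `(σ, d)` is a condition of `ℙ(I)`. -/
def IsCondition (I : Set (Set ℕ)) (σ : ℕ → ℕ → Bool) (d : ℕ → ℕ) : Prop :=
  (∀ n, d n ≤ n) ∧ (∀ n, {m | d m = n} ∈ I)

/-- The ordering on conditions of `ℙ(I)`. -/
def CondLe (σ : ℕ → ℕ → Bool) (dσ : ℕ → ℕ) (τ : ℕ → ℕ → Bool) (dτ : ℕ → ℕ) : Prop :=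
  (∀ n, dσ n ≤ dτ n ∧ ∀ i, dτ n ≤ i → i < n → σ n i = τ n i) ∧
  (∃ e : ℕ → ℕ, (∀ n, e n ≤ n) ∧ ∀ n, dσ n = e (dτ n)) ∧
  (∀ n m, dτ n = dτ m → ∀ i, dσ n ≤ i → i < dτ n → σ n i = σ m i)

/-- `D` is a dense set of conditions of `ℙ(I)`. -/
def IsDense (I : Set (Set ℕ)) (D : Set Cond) : Prop :=
  (∀ p ∈ D, IsCondition I p.1 p.2) ∧
  ∀ p : Cond, IsCondition I p.1 p.2 → ∃ q ∈ D, CondLe q.1 q.2 p.1 p.2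

/-- Two conditions are compatible if they have a common extension. -/
def Compatible (I : Set (Set ℕ)) (p q : Cond) : Prop :=
  ∃ r : Cond, IsCondition I r.1 r.2 ∧ CondLe r.1 r.2 p.1 p.2 ∧ CondLe r.1 r.2 q.1 q.2

/-- `W` is predense below the condition `p`. -/
def PredenseBelow (I : Set (Set ℕ)) (W : Set Cond) (p : Cond) : Prop :=
  ∀ q : Cond, IsCondition I q.1 q.2 → CondLe q.1 q.2 p.1 p.2 →
    ∃ w ∈ W, Compatible I q w

-- The amalgamation `σ[⃗g]` of a condition `(σ, dσ)` along `S ⊆ ℕ` with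
-- `⃗g` assigning to each `ℓ ∈ dσ⁻¹(S)` a function `⃗g ℓ : [0, dσ ℓ) → 2`.
open Classical in
noncomputable def amalg (σ : ℕ → ℕ → Bool) (dσ : ℕ → ℕ) (S : Set ℕ)
    (g : ℕ → ℕ → Bool) : Cond :=
  (fun ℓ i => if dσ ℓ ∈ S ∧ i < dσ ℓ then g ℓ i else σ ℓ i,
   fun ℓ => if dσ ℓ ∈ S then 0 else dσ ℓ)

/-!
Call `d ℓ` the level of row `ℓ`. Starting from `τ`, we build a fusion sequence whose stage `n` works
at level `n - 1`: the rows of level at most `n - 1` are frozen, and whatever an extension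
would collapse to lower levels is collected at level `n - 1` instead. The levels `k < n` of the
parity of `n` have only `2 ^ ∑ k` uniform fillings; for each of them in turn we fill these levels
accordingly, fill the levels of opposite parity with values fixed once and for all
(the maps `⃗g`), and extend into the dense set. An extension of the limit amalgamated along the
levels of opposite parity can be extended further so that all levels below `n` collapse; it then
determines one of these fillings, so it is compatible with the corresponding element of the dense
set. Finally, by maximality the rows of even level or the rows of odd level form a set in `I`, and
only this is needed for the infinite amalgamation to be a condition.

The values `σ ℓ i` with `i < d ℓ` are irrelevant to a condition, and we store the maps `⃗g`
there: amalgamating with the stored values only changes the levels.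
-/

open Finset (range)

local notation:50 p:51 " ≼ " q:51 => CondLe (Prod.fst p) (Prod.snd p) (Prod.fst q) (Prod.snd q)

variable {I : Set (Set ℕ)}

/-! ### The extension order -/

section Order

variable {σ τ ρ : ℕ → ℕ → Bool} {dσ dτ dρ : ℕ → ℕ}

theorem condLe_iff_levelwise :
    CondLe σ dσ τ dτ ↔
      (∀ l, dσ l ≤ dτ l) ∧ (∀ l i, dτ l ≤ i → i < l → σ l i = τ l i) ∧
      (∀ l l', dτ l = dτ l' → dσ l = dσ l') ∧
      (∀ l l' i, dτ l = dτ l' → dσ l ≤ i → i < dτ l → σ l i = σ l' i) := by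
  classical
  constructor
  · rintro ⟨hrow, ⟨e, -, he⟩, huniform⟩
    exact ⟨fun l => (hrow l).1, fun l => (hrow l).2, fun l l' hl => by rw [he, he, hl],
      fun l l' i hl => huniform l l' hl i⟩
  · rintro ⟨hle, hagree, hcongr, huniform⟩
    refine ⟨fun l => ⟨hle l, hagree l⟩, ?_, fun l l' hl i => huniform l l' i hl⟩
    refine ⟨fun k => if h : ∃ l, dτ l = k then dσ h.choose else k, fun k => ?_, fun l => ?_⟩
    · by_cases h : ∃ l, dτ l = k
      · simpa only [dif_pos h, h.choose_spec] using hle h.choose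
      · simp only [dif_neg h, le_refl]
    · have h : ∃ l', dτ l' = dτ l := ⟨l, rfl⟩
      simpa only [dif_pos h] using hcongr _ _ h.choose_spec.symm

namespace CondLe

theorem level_le (h : CondLe σ dσ τ dτ) (l : ℕ) : dσ l ≤ dτ l :=
  (h.1 l).1

theorem agree (h : CondLe σ dσ τ dτ) {l i : ℕ} (hi : dτ l ≤ i) (hil : i < l) : σ l i = τ l i :=
  (h.1 l).2 i hi hil

theorem level_congr (h : CondLe σ dσ τ dτ) {l l' : ℕ} (hl : dτ l = dτ l') : dσ l = dσ l' :=
  (condLe_iff_levelwise.1 h).2.2.1 l l' hl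

theorem uniform (h : CondLe σ dσ τ dτ) {l l' i : ℕ} (hl : dτ l = dτ l') (hi : dσ l ≤ i)
    (hil : i < dτ l) : σ l i = σ l' i :=
  h.2.2 l l' hl i hi hil

protected theorem refl (σ : ℕ → ℕ → Bool) (dσ : ℕ → ℕ) : CondLe σ dσ σ dσ :=
  condLe_iff_levelwise.2 ⟨fun _ => le_rfl, fun _ _ _ _ => rfl, fun _ _ h => h,
    fun _ _ _ _ hi hil => absurd hil hi.not_gt⟩

protected theorem trans (hρ : ∀ l, dρ l ≤ l) (hστ : CondLe σ dσ τ dτ) (hτρ : CondLe τ dτ ρ dρ) :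
    CondLe σ dσ ρ dρ := by
  refine condLe_iff_levelwise.2 ⟨fun l => (hστ.level_le l).trans (hτρ.level_le l),
    fun l i hi hil => ?_, fun l l' hl => hστ.level_congr (hτρ.level_congr hl),
    fun l l' i hl hi hil => ?_⟩
  · rw [hστ.agree ((hτρ.level_le l).trans hi) hil, hτρ.agree hi hil]
  · have hτl : dτ l = dτ l' := hτρ.level_congr hl
    rcases lt_or_ge i (dτ l) with h | h
    · exact hστ.uniform hτl hi h
    · rw [hστ.agree h (hil.trans_le (hρ l)),
        hστ.agree (hτl ▸ h) ((hl ▸ hil).trans_le (hρ l'))]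
      exact hτρ.uniform hl h hil

end CondLe

end Order

/-! ### Conditions and amalgamations -/

section Amalgamation

variable {σ g : ℕ → ℕ → Bool} {d : ℕ → ℕ} {S : Set ℕ}

theorem IsIdeal.preimage_mem_of_finite (hI : IsIdeal I) (hd : ∀ n, {l | d l = n} ∈ I)
    (hS : S.Finite) : d ⁻¹' S ∈ I := by
  induction S, hS using Set.Finite.induction_on with
  | empty => exact hI.1
  | @insert n S _ _ ih => exact hI.2.2 {l | d l = n} (d ⁻¹' S) (hd n) ih

theorem amalg_snd_of_mem {l : ℕ} (h : d l ∈ S) : (amalg σ d S g).2 l = 0 :=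
  if_pos h

theorem amalg_snd_of_notMem {l : ℕ} (h : d l ∉ S) : (amalg σ d S g).2 l = d l :=
  if_neg h

theorem amalg_snd_le (l : ℕ) : (amalg σ d S g).2 l ≤ d l := by
  by_cases h : d l ∈ S
  · simp only [amalg_snd_of_mem h, zero_le]
  · exact (amalg_snd_of_notMem h).le

theorem amalg_snd_congr {l l' : ℕ} (h : d l = d l') :
    (amalg σ d S g).2 l = (amalg σ d S g).2 l' := by
  unfold amalg
  grind

theorem amalg_fst_of_notMem {l : ℕ} (h : d l ∉ S) : (amalg σ d S g).1 l = σ l := by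
  simp only [amalg, h, false_and, if_false]

theorem amalg_fst_of_mem {l i : ℕ} (h : d l ∈ S) (hi : i < d l) :
    (amalg σ d S g).1 l i = g l i :=
  if_pos ⟨h, hi⟩

theorem amalg_fst_of_le {l i : ℕ} (hi : d l ≤ i) : (amalg σ d S g).1 l i = σ l i :=
  if_neg fun h => h.2.not_ge hi

theorem amalg_self_fst : (amalg σ d S σ).1 = σ := by
  simp only [amalg, ite_self]

theorem IsCondition.amalg (hI : IsIdeal I) (hσ : IsCondition I σ d) (hS : d ⁻¹' S ∈ I) :
    IsCondition I (amalg σ d S g).1 (amalg σ d S g).2 := by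
  refine ⟨fun l => (amalg_snd_le l).trans (hσ.1 l), fun n => ?_⟩
  refine hI.2.1 _ _ (fun l (hl : _ = n) => ?_) (hI.2.2 _ _ hS (hσ.2 n))
  by_cases h : d l ∈ S
  · exact Or.inl h
  · exact Or.inr ((amalg_snd_of_notMem h).symm.trans hl)

theorem amalg_condLe (hg : ∀ l l' i, d l = d l' → d l ∈ S → i < d l → g l i = g l' i) :
    CondLe (amalg σ d S g).1 (amalg σ d S g).2 σ d := by
  refine condLe_iff_levelwise.2 ⟨amalg_snd_le, fun l i hi _ => amalg_fst_of_le hi,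
    fun l l' => amalg_snd_congr, fun l l' i hl hi hil => ?_⟩
  by_cases h : d l ∈ S
  · rw [amalg_fst_of_mem h hil, amalg_fst_of_mem (hl ▸ h) (hl ▸ hil)]
    exact hg l l' i hl h hil
  · rw [amalg_snd_of_notMem h] at hi
    exact absurd hil hi.not_gt

end Amalgamation

/-! ### The fusion order -/

variable {p p' p'' w : Cond} {m : ℕ}

/-- The fusion order at level `m`: `p'` extends `p`, the rows of `p` of level at most `m` are
frozen, and the remaining ones keep level at least `m`. All of the row `p.1 l` is kept track of,
including the values `p.1 l i` for `i < p.2 l`, which do not belong to the condition: they store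
the maps `⃗g` of the amalgamations. -/
structure FusionLe (m : ℕ) (p' p : Cond) : Prop where
  condLe : p' ≼ p
  level_eq : ∀ l, p.2 l ≤ m → p'.2 l = p.2 l
  row_eq : ∀ l, p.2 l ≤ m → p'.1 l = p.1 l
  le_level : ∀ l, m < p.2 l → m ≤ p'.2 l
  uniform : ∀ l l' i, p.2 l = p.2 l' → m < p.2 l → i < p.2 l → p'.1 l i = p'.1 l' i

namespace FusionLe

theorem le_level_of_le {n l : ℕ} (hmn : m ≤ n) (h : FusionLe n p' p) (hl : m < p.2 l) :
    m ≤ p'.2 l := by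
  rcases le_or_gt (p.2 l) n with hn | hn
  · exact hl.le.trans_eq (h.level_eq l hn).symm
  · exact hmn.trans (h.le_level l hn)

protected theorem trans {n : ℕ} (hmn : m ≤ n) (hp : ∀ l, p.2 l ≤ l) (h' : FusionLe n p'' p')
    (h : FusionLe m p' p) : FusionLe m p'' p where
  condLe := h'.condLe.trans hp h.condLe
  level_eq l hl := by
    have hl' := h.level_eq l hl
    rw [h'.level_eq l (by omega), hl']
  row_eq l hl := by
    have hl' := h.level_eq l hl
    rw [h'.row_eq l (by omega), h.row_eq l hl]
  le_level l hl := by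
    rcases (h.le_level l hl).eq_or_lt with hl' | hl'
    · exact (hl'.trans (h'.level_eq l (hl' ▸ hmn)).symm).le
    · exact h'.le_level_of_le hmn hl'
  uniform l l' i hl hml hil := by
    have hl' : p'.2 l = p'.2 l' := h.condLe.level_congr hl
    have hbase : p'.1 l i = p'.1 l' i := h.uniform l l' i hl hml hil
    rcases le_or_gt (p'.2 l) n with hn | hn
    · rwa [h'.row_eq l hn, h'.row_eq l' (hl' ▸ hn)]
    rcases lt_or_ge i (p'.2 l) with hi | hi
    · exact h'.uniform l l' i hl' hn hi
    · rwa [h'.condLe.agree hi (hil.trans_le (hp l)),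
        h'.condLe.agree (hl' ▸ hi) ((hl ▸ hil).trans_le (hp l'))]

theorem of_levelwise
    (h : ∀ k, ∃ q, FusionLe m q p ∧ ∀ l, p.2 l = k → p'.2 l = q.2 l ∧ p'.1 l = q.1 l) :
    FusionLe m p' p := by
  choose Q hQ hlevel using h
  have hd l l' (hl : p.2 l = p.2 l') : p'.2 l' = (Q (p.2 l)).2 l' := (hlevel _ l' hl.symm).1
  have hrow l l' (hl : p.2 l = p.2 l') : p'.1 l' = (Q (p.2 l)).1 l' := (hlevel _ l' hl.symm).2
  refine ⟨condLe_iff_levelwise.2 ⟨fun l => ?_, fun l i hi hil => ?_, fun l l' hl => ?_,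
    fun l l' i hl hi hil => ?_⟩, fun l hl => ?_, fun l hl => ?_, fun l hl => ?_,
    fun l l' i hl hml hil => ?_⟩
  · exact (hd l l rfl).trans_le ((hQ _).condLe.level_le l)
  · rw [hrow l l rfl, (hQ _).condLe.agree hi hil]
  · rw [hd l l rfl, hd l l' hl, (hQ _).condLe.level_congr hl]
  · rw [hd l l rfl] at hi
    rw [hrow l l rfl, hrow l l' hl, (hQ _).condLe.uniform hl hi hil]
  · rw [hd l l rfl, (hQ _).level_eq l hl]
  · rw [hrow l l rfl, (hQ _).row_eq l hl]
  · rw [hd l l rfl]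
    exact (hQ _).le_level l hl
  · rw [hrow l l rfl, hrow l l' hl, (hQ _).uniform l l' i hl hml hil]

theorem amalg_self_condLe (h : FusionLe 0 p' p) (S : Set ℕ) :
    amalg p'.1 p'.2 S p'.1 ≼ p := by
  rw [amalg_self_fst]
  exact condLe_iff_levelwise.2 ⟨fun l => (amalg_snd_le l).trans (h.condLe.level_le l),
    fun l i => h.condLe.agree, fun l l' hl => amalg_snd_congr (h.condLe.level_congr hl),
    fun l l' i hl _ hil => h.uniform l l' i hl (by omega) hil⟩

end FusionLe

/-! ### Fusion sequences -/

section FusionSequence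

variable {P : ℕ → Cond} {lev : ℕ → ℕ}

theorem fusionLe_of_lt (hlev : Monotone lev) (hP : ∀ n, IsCondition I (P n).1 (P n).2)
    (hstep : ∀ n, FusionLe (lev n) (P (n + 1)) (P n)) {n n' : ℕ} (h : n < n') :
    FusionLe (lev n) (P n') (P n) := by
  induction n', h using Nat.le_induction with
  | base => exact hstep n
  | succ n' h ih => exact (hstep n').trans (hlev (by omega)) (hP n).1 ih

/-- `p` is the limit of the fusion sequence `P`: it has the rows that get frozen in `P`. -/
def IsFusionLimit (lev : ℕ → ℕ) (P : ℕ → Cond) (p : Cond) : Prop :=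
  ∀ n l, (P n).2 l ≤ lev n → p.2 l = (P n).2 l ∧ p.1 l = (P n).1 l

theorem exists_isFusionLimit (hlev : ∀ k, ∃ n, k ≤ lev n)
    (hP : ∀ n, IsCondition I (P n).1 (P n).2)
    (hlt : ∀ n n', n < n' → FusionLe (lev n) (P n') (P n)) :
    ∃ p, IsFusionLimit lev P p := by
  have hstable {n n' l : ℕ} (hn : n ≤ n') (hl : (P n).2 l ≤ lev n) :
      (P n').2 l = (P n).2 l ∧ (P n').1 l = (P n).1 l := by
    rcases hn.eq_or_lt with rfl | hn
    · exact ⟨rfl, rfl⟩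
    · exact ⟨(hlt n n' hn).level_eq l hl, (hlt n n' hn).row_eq l hl⟩
  choose N hN using hlev
  refine ⟨(fun l => (P (N l)).1 l, fun l => (P (N l)).2 l), fun n l hl => ?_⟩
  rcases le_total n (N l) with h | h
  · exact hstable h hl
  · have := hstable h (((hP _).1 l).trans (hN l))
    exact ⟨this.1.symm, this.2.symm⟩

theorem IsFusionLimit.fusionLe (hp : IsFusionLimit lev P p) (hlev : ∀ k, ∃ n, k ≤ lev n)
    (hmono : Monotone lev) (hlt : ∀ n n', n < n' → FusionLe (lev n) (P n') (P n)) (n : ℕ) :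
    FusionLe (lev n) p (P n) := by
  refine FusionLe.of_levelwise fun k => ?_
  obtain ⟨N, hN⟩ := hlev k
  have hN' : k ≤ lev (max N (n + 1)) := hN.trans (hmono (le_max_left _ _))
  have hle := hlt n (max N (n + 1)) (by omega)
  exact ⟨_, hle, fun l hl => hp _ l ((hle.condLe.level_le l).trans (hl.trans_le hN'))⟩

theorem isCondition_of_forall_fusionLe (hI : IsIdeal I) (hlev : ∀ k, ∃ n, k ≤ lev n)
    (hP : ∀ n, IsCondition I (P n).1 (P n).2) (hle : ∀ n, FusionLe (lev n) p (P n)) :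
    IsCondition I p.1 p.2 := by
  refine ⟨fun l => ((hle 0).condLe.level_le l).trans ((hP 0).1 l), fun k => ?_⟩
  obtain ⟨n, hn⟩ := hlev (k + 1)
  refine hI.2.1 _ _ (fun l (hl : p.2 l = k) => ?_) ((hP n).2 k)
  have hfrozen : (P n).2 l ≤ lev n := by
    by_contra! h
    have := (hle n).le_level l h
    omega
  exact ((hle n).level_eq l hfrozen).symm.trans hl

end FusionSequence

/-! ### Amalgamating all levels up to `m` -/

section LevelAmalgamation

variable {T : Set ℕ} {s : ℕ → ℕ → Bool}

open Classical in
/-- The amalgamation of `p` along all levels `k ≤ m`, where the levels in `T` are filled with the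
values stored in `p` and every other level `k` uniformly with `s k`. -/
noncomputable def levelAmalg (m : ℕ) (T : Set ℕ) (s : ℕ → ℕ → Bool) (p : Cond) : Cond :=
  amalg p.1 p.2 (Set.Iic m) fun l i => if p.2 l ∈ T then p.1 l i else s (p.2 l) i

theorem levelAmalg_snd (l : ℕ) :
    (levelAmalg m T s p).2 l = if p.2 l ≤ m then 0 else p.2 l := by
  simp only [levelAmalg, amalg, Set.mem_Iic]

theorem lt_of_lt_levelAmalg_snd {l i : ℕ} (h : i < (levelAmalg m T s p).2 l) :
    m < p.2 l ∧ i < p.2 l := by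
  rw [levelAmalg_snd] at h
  split_ifs at h <;> omega

theorem eq_of_levelAmalg_snd_eq {l l' : ℕ} (hl : m < p.2 l)
    (h : (levelAmalg m T s p).2 l = (levelAmalg m T s p).2 l') : p.2 l = p.2 l' := by
  rw [levelAmalg_snd, levelAmalg_snd] at h
  split_ifs at h <;> omega

theorem levelAmalg_fst_of_mem {l : ℕ} (h : p.2 l ∈ T) : (levelAmalg m T s p).1 l = p.1 l := by
  simp only [levelAmalg, amalg, h, if_true, ite_self]

theorem levelAmalg_fst_of_lt {l : ℕ} (h : m < p.2 l) : (levelAmalg m T s p).1 l = p.1 l :=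
  amalg_fst_of_notMem h.not_ge

theorem levelAmalg_fst_of_le {l i : ℕ} (h : p.2 l ≤ i) :
    (levelAmalg m T s p).1 l i = p.1 l i :=
  amalg_fst_of_le h

theorem levelAmalg_fst_of_notMem {l i : ℕ} (hT : p.2 l ∉ T) (hm : p.2 l ≤ m) (hi : i < p.2 l) :
    (levelAmalg m T s p).1 l i = s (p.2 l) i :=
  (amalg_fst_of_mem hm hi).trans (if_neg hT)

theorem levelAmalg_fst_of_ge (hm : 0 < m → m ∈ T) {l : ℕ} (h : m ≤ p.2 l) :
    (levelAmalg m T s p).1 l = p.1 l := by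
  rcases h.eq_or_lt with h | h
  · rcases m.eq_zero_or_pos with h0 | h0
    · exact funext fun i => levelAmalg_fst_of_le (by omega)
    · exact levelAmalg_fst_of_mem (h ▸ hm h0)
  · exact levelAmalg_fst_of_lt h

theorem levelAmalg_row_congr {l : ℕ} (hd : p'.2 l = p.2 l) (hrow : p'.1 l = p.1 l) :
    (levelAmalg m T s p').1 l = (levelAmalg m T s p).1 l :=
  congrArg₂ (fun r k => (levelAmalg m T s (fun _ => r, fun _ => k)).1 l) hrow hd

theorem levelAmalg_congr {s' : ℕ → ℕ → Bool}
    (h : ∀ k ≤ m, k ∉ T → ∀ i < k, s k i = s' k i) :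
    levelAmalg m T s p = levelAmalg m T s' p := by
  refine Prod.ext (funext₂ fun l i => ?_) rfl
  by_cases hT : p.2 l ∈ T
  · rw [levelAmalg_fst_of_mem hT, levelAmalg_fst_of_mem hT]
  rcases le_or_gt (p.2 l) i with hi | hi
  · rw [levelAmalg_fst_of_le hi, levelAmalg_fst_of_le hi]
  rcases lt_or_ge m (p.2 l) with hm | hm
  · rw [levelAmalg_fst_of_lt hm, levelAmalg_fst_of_lt hm]
  · rw [levelAmalg_fst_of_notMem hT hm hi, levelAmalg_fst_of_notMem hT hm hi, h _ hm hT i hi]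

theorem FusionLe.levelAmalg_condLe {n : ℕ} (hmn : m ≤ n) (hm : 0 < m → m ∈ T)
    (h : FusionLe n p' p) : levelAmalg m T s p' ≼ levelAmalg m T s p := by
  have hlevel l : (levelAmalg m T s p').2 l = if p.2 l ≤ m ∨ p'.2 l ≤ m then 0 else p'.2 l := by
    have := h.condLe.level_le l
    rw [levelAmalg_snd]
    split_ifs <;> omega
  refine condLe_iff_levelwise.2 ⟨fun l => ?_, fun l i hi hil => ?_, fun l l' hl => ?_,
    fun l l' i hl hi hil => ?_⟩
  · have := h.condLe.level_le l
    rw [hlevel, levelAmalg_snd]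
    split_ifs <;> omega
  · rcases le_or_gt (p.2 l) m with hl | hl
    · rw [levelAmalg_row_congr (h.level_eq l (hl.trans hmn)) (h.row_eq l (hl.trans hmn))]
    · rw [levelAmalg_snd, if_neg hl.not_ge] at hi
      rw [levelAmalg_fst_of_ge hm (h.le_level_of_le hmn hl), levelAmalg_fst_of_lt hl,
        h.condLe.agree hi hil]
  · rw [levelAmalg_snd, levelAmalg_snd] at hl
    rw [hlevel, hlevel]
    by_cases hpl : p.2 l = p.2 l'
    · rw [hpl, h.condLe.level_congr hpl]
    · split_ifs at hl ⊢ <;> omega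
  · obtain ⟨hml, hil'⟩ := lt_of_lt_levelAmalg_snd hil
    have hpl := eq_of_levelAmalg_snd_eq hml hl
    rw [levelAmalg_fst_of_ge hm (h.le_level_of_le hmn hml),
      levelAmalg_fst_of_ge hm (h.le_level_of_le hmn (hpl ▸ hml))]
    rcases le_or_gt (p.2 l) n with hn | hn
    · rw [hlevel, h.level_eq l hn, if_neg (by omega)] at hi
      exact absurd hil' hi.not_gt
    · exact h.uniform l l' i hpl hn hil'

/-- `W` captures `p` if every way of filling the levels `k ≤ m` outside `T` extends a member
of `W`. -/
def Captures (m : ℕ) (T : Set ℕ) (W : Set Cond) (p : Cond) : Prop :=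
  ∀ s, ∃ w ∈ W, levelAmalg m T s p ≼ w

theorem Captures.of_fusionLe {W : Set Cond} {n : ℕ} (hmn : m ≤ n) (hm : 0 < m → m ∈ T)
    (hW : ∀ w ∈ W, ∀ l, w.2 l ≤ l) (h : FusionLe n p' p) (hp : Captures m T W p) :
    Captures m T W p' := fun s => by
  obtain ⟨w, hw, hle⟩ := hp s
  exact ⟨w, hw, (h.levelAmalg_condLe hmn hm).trans (hW w hw) hle⟩

end LevelAmalgamation

/-! ### Grafting -/

section Graft

variable {T : Set ℕ} {s g : ℕ → ℕ → Bool}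

/-- Undoes an amalgamation of `p` along the levels `≤ m` in an extension `w` of it: the rows of
`p` of level at most `m` are restored, the others come from `w`, and those whose level dropped
below `m` are collected at level `m`. -/
def graft (m : ℕ) (p w : Cond) : Cond :=
  (fun l i => if p.2 l ≤ m then p.1 l i else if i < w.2 l then false else w.1 l i,
   fun l => if p.2 l ≤ m then p.2 l else max m (w.2 l))

theorem graft_snd_of_le {l : ℕ} (h : p.2 l ≤ m) : (graft m p w).2 l = p.2 l :=
  if_pos h

theorem graft_snd_of_lt {l : ℕ} (h : m < p.2 l) : (graft m p w).2 l = max m (w.2 l) :=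
  if_neg h.not_ge

theorem graft_fst_of_le {l : ℕ} (h : p.2 l ≤ m) : (graft m p w).1 l = p.1 l :=
  funext fun _ => if_pos h

theorem graft_fst_of_lt {l : ℕ} (h : m < p.2 l) (i : ℕ) :
    (graft m p w).1 l i = if i < w.2 l then false else w.1 l i :=
  if_neg h.not_ge

theorem IsCondition.graft (hI : IsIdeal I) (hp : IsCondition I p.1 p.2)
    (hw : IsCondition I w.1 w.2) : IsCondition I (graft m p w).1 (graft m p w).2 := by
  refine ⟨fun l => ?_, fun n => ?_⟩
  · have := hp.1 l
    have := hw.1 l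
    rcases le_or_gt (p.2 l) m with h | h
    · rwa [graft_snd_of_le h]
    · rw [graft_snd_of_lt h]
      omega
  · refine hI.2.1 _ _ (fun l (hl : _ = n) => ?_)
      (hI.2.2 _ _ (hI.preimage_mem_of_finite hp.2 (Set.finite_Iic m))
        (hI.preimage_mem_of_finite hw.2 (Set.finite_Iic n)))
    rcases le_or_gt (p.2 l) m with h | h
    · exact Or.inl h
    · rw [graft_snd_of_lt h] at hl
      exact Or.inr (hl ▸ le_max_right m (w.2 l))

theorem fusionLe_graft (hw : w ≼ amalg p.1 p.2 (Set.Iic m) g) : FusionLe m (graft m p w) p := by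
  have hsnd {l} (hl : m < p.2 l) : (amalg p.1 p.2 (Set.Iic m) g).2 l = p.2 l :=
    amalg_snd_of_notMem hl.not_ge
  have hle {l} (hl : m < p.2 l) : w.2 l ≤ p.2 l := (hw.level_le l).trans_eq (hsnd hl)
  have hcongr {l l'} (hl : p.2 l = p.2 l') : w.2 l = w.2 l' := hw.level_congr (amalg_snd_congr hl)
  have huniform l l' i (hl : p.2 l = p.2 l') (hml : m < p.2 l) (hil : i < p.2 l) :
      (graft m p w).1 l i = (graft m p w).1 l' i := by
    rw [graft_fst_of_lt hml, graft_fst_of_lt (hl ▸ hml), hcongr hl]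
    split_ifs with h
    · rfl
    · exact hw.uniform (amalg_snd_congr hl) (hcongr hl ▸ not_lt.1 h) ((hsnd hml).symm ▸ hil)
  refine ⟨condLe_iff_levelwise.2 ⟨fun l => ?_, fun l i hi hil => ?_, fun l l' hl => ?_,
    fun l l' i hl hi hil => ?_⟩, fun l => graft_snd_of_le, fun l => graft_fst_of_le,
    fun l hl => (le_max_left _ _).trans_eq (graft_snd_of_lt hl).symm, huniform⟩
  · rcases le_or_gt (p.2 l) m with h | h
    · exact (graft_snd_of_le h).le
    · exact (graft_snd_of_lt h).trans_le (max_le h.le (hle h))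
  · rcases le_or_gt (p.2 l) m with h | h
    · rw [graft_fst_of_le h]
    · rw [graft_fst_of_lt h, if_neg ((hle h).trans hi).not_gt,
        hw.agree ((hsnd h).trans_le hi) hil, amalg_fst_of_le hi]
  · simp only [graft, hl, hcongr hl]
  · rcases le_or_gt (p.2 l) m with h | h
    · exact absurd hil ((graft_snd_of_le h).symm.trans_le hi).not_gt
    · exact huniform l l' i hl h hil

theorem levelAmalg_graft_condLe (hm : 0 < m → m ∈ T) (hw : w ≼ levelAmalg m T s p) :
    levelAmalg m T s (graft m p w) ≼ w := by
  have hzero {l} (hl : p.2 l ≤ m) : w.2 l = 0 :=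
    Nat.eq_zero_of_le_zero ((hw.level_le l).trans_eq (amalg_snd_of_mem hl))
  have hlevel l : (levelAmalg m T s (graft m p w)).2 l = if w.2 l ≤ m then 0 else w.2 l := by
    rw [levelAmalg_snd]
    rcases le_or_gt (p.2 l) m with hl | hl
    · rw [graft_snd_of_le hl, if_pos hl, hzero hl, if_pos m.zero_le]
    · rw [graft_snd_of_lt hl]
      split_ifs <;> omega
  have hrow {l} (hl : m < p.2 l) (i : ℕ) : (levelAmalg m T s (graft m p w)).1 l i =
      if i < w.2 l then false else w.1 l i := by
    rw [levelAmalg_fst_of_ge hm ((le_max_left _ _).trans_eq (graft_snd_of_lt hl).symm),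
      graft_fst_of_lt hl]
  refine condLe_iff_levelwise.2 ⟨fun l => ?_, fun l i hi hil => ?_, fun l l' hl => ?_,
    fun l l' i hl _ hil => ?_⟩
  · rw [hlevel]
    split_ifs <;> omega
  · rcases le_or_gt (p.2 l) m with hl | hl
    · rw [levelAmalg_row_congr (graft_snd_of_le hl) (graft_fst_of_le hl)]
      exact (hw.agree ((amalg_snd_of_mem hl).trans_le i.zero_le) hil).symm
    · rw [hrow hl, if_neg hi.not_gt]
  · rw [hlevel, hlevel, hl]
  · have hpos {l} (hl : i < w.2 l) : m < p.2 l := by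
      by_contra! h
      have := hzero h
      omega
    rw [hrow (hpos hil), hrow (hpos (hl ▸ hil)), if_pos hil, if_pos (hl ▸ hil)]

end Graft

/-! ### One stage of the construction -/

section Stage

variable {T : Set ℕ} {D : Set Cond}

theorem exists_fusionLe_levelAmalg_condLe (hI : IsIdeal I) (hD : IsDense I D)
    (hp : IsCondition I p.1 p.2) (hm : 0 < m → m ∈ T) (s : ℕ → ℕ → Bool) :
    ∃ w ∈ D, ∃ p' : Cond, IsCondition I p'.1 p'.2 ∧ FusionLe m p' p ∧
      levelAmalg m T s p' ≼ w := by
  have hfin : p.2 ⁻¹' Set.Iic m ∈ I := hI.preimage_mem_of_finite hp.2 (Set.finite_Iic m)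
  obtain ⟨w, hwD, hw⟩ := hD.2 (levelAmalg m T s p) (hp.amalg hI hfin)
  exact ⟨w, hwD, graft m p w, hp.graft hI (hD.1 w hwD), fusionLe_graft hw,
    levelAmalg_graft_condLe hm hw⟩

theorem exists_fusionLe_forall_mem_finset (hI : IsIdeal I) (hD : IsDense I D)
    (hp : IsCondition I p.1 p.2) (hm : 0 < m → m ∈ T) (A : Finset (ℕ → ℕ → Bool)) :
    ∃ (p' : Cond) (W : Set Cond), IsCondition I p'.1 p'.2 ∧ FusionLe m p' p ∧
      W ⊆ D ∧ W.Finite ∧ W.ncard ≤ A.card ∧ ∀ s ∈ A, ∃ w ∈ W, levelAmalg m T s p' ≼ w := by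
  classical
  induction A using Finset.induction_on with
  | empty =>
    have hgraft := fusionLe_graft (CondLe.refl _ (amalg p.1 p.2 (Set.Iic m) p.1).2)
    have hfin := hI.preimage_mem_of_finite hp.2 (Set.finite_Iic m)
    exact ⟨_, ∅, hp.graft hI (hp.amalg hI hfin), hgraft, Set.empty_subset D, Set.finite_empty,
      by simp, by simp⟩
  | insert s A hs ih =>
    obtain ⟨q, W, hq, hqp, hWD, hWfin, hWcard, hW⟩ := ih
    obtain ⟨w, hwD, p', hp', hp'q, hw⟩ := exists_fusionLe_levelAmalg_condLe hI hD hq hm s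
    refine ⟨p', insert w W, hp', hp'q.trans le_rfl hp.1 hqp, Set.insert_subset hwD hWD,
      hWfin.insert w, ?_, Finset.forall_mem_insert _ _ _ |>.2 ⟨⟨w, Set.mem_insert w W, hw⟩, ?_⟩⟩
    · rw [Finset.card_insert_of_notMem hs]
      exact (Set.ncard_insert_le w W).trans (by omega)
    · intro t ht
      obtain ⟨v, hv, hle⟩ := hW t ht
      exact ⟨v, Set.mem_insert_of_mem w hv,
        (hp'q.levelAmalg_condLe le_rfl hm).trans (hD.1 v (hWD hv)).1 hle⟩

theorem exists_finset_forall_exists_eq (F : Finset ℕ) :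
    ∃ A : Finset (ℕ → ℕ → Bool), A.card ≤ 2 ^ (∑ k ∈ F, k) ∧
      ∀ s : ℕ → ℕ → Bool, ∃ t ∈ A, ∀ k ∈ F, ∀ i < k, s k i = t k i := by
  classical
  let cells : Finset (Σ _ : ℕ, ℕ) := F.sigma fun k => range k
  refine ⟨cells.powerset.image fun B k i => decide (⟨k, i⟩ ∈ B), ?_, fun s => ?_⟩
  · refine Finset.card_image_le.trans_eq ?_
    rw [Finset.card_powerset, Finset.card_sigma]
    simp only [Finset.card_range]
  · refine ⟨_, Finset.mem_image_of_mem _ (Finset.mem_powerset.2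
      (Finset.filter_subset (fun c => s c.1 c.2) cells)), fun k hk i hi => ?_⟩
    simp [cells, hk, hi]

open Classical in
theorem exists_fusionLe_captures (hI : IsIdeal I) (hD : IsDense I D)
    (hp : IsCondition I p.1 p.2) (hm : 0 < m → m ∈ T) :
    ∃ (p' : Cond) (W : Set Cond), IsCondition I p'.1 p'.2 ∧ FusionLe m p' p ∧
      W ⊆ D ∧ W.Finite ∧ W.ncard ≤ 2 ^ (∑ k ∈ range (m + 1) with k ∉ T, k) ∧
      Captures m T W p' := by
  obtain ⟨A, hAcard, hA⟩ := exists_finset_forall_exists_eq {k ∈ range (m + 1) | k ∉ T}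
  obtain ⟨p', W, hp', hle, hWD, hWfin, hWcard, hW⟩ :=
    exists_fusionLe_forall_mem_finset hI hD hp hm A
  refine ⟨p', W, hp', hle, hWD, hWfin, hWcard.trans hAcard, fun s => ?_⟩
  obtain ⟨t, ht, hst⟩ := hA s
  have hcongr : levelAmalg m T s p' = levelAmalg m T t p' :=
    levelAmalg_congr fun k hk hkT =>
      hst k (Finset.mem_filter.2 ⟨Finset.mem_range.2 (by omega), hkT⟩)
  exact hcongr ▸ hW t ht

end Stage

/-! ### The fusion -/

open Classical in
theorem exists_fusion {D : ℕ → Set Cond} {lev : ℕ → ℕ} {T : ℕ → Set ℕ} (hI : IsIdeal I)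
    (hD : ∀ n, IsDense I (D n)) (hmono : Monotone lev) (hlev : ∀ k, ∃ n, k ≤ lev n)
    (hT : ∀ n, 0 < lev n → lev n ∈ T n) (hp : IsCondition I p.1 p.2) :
    ∃ (q : Cond) (W : ℕ → Set Cond), IsCondition I q.1 q.2 ∧ FusionLe (lev 0) q p ∧
      ∀ n, W n ⊆ D n ∧ (W n).Finite ∧
        (W n).ncard ≤ 2 ^ (∑ k ∈ range (lev n + 1) with k ∉ T n, k) ∧
        Captures (lev n) (T n) (W n) q := by
  choose next V hnext hle hVD hVfin hVcard hV using
    fun n (r : {r : Cond // IsCondition I r.1 r.2}) =>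
      exists_fusionLe_captures hI (hD n) r.2 (hT n)
  let P : ℕ → {r : Cond // IsCondition I r.1 r.2} :=
    Nat.rec ⟨p, hp⟩ fun n r => ⟨next n r, hnext n r⟩
  have hP n : IsCondition I (P n).1.1 (P n).1.2 := (P n).2
  have hlt n n' : n < n' → FusionLe (lev n) (P n').1 (P n).1 :=
    fusionLe_of_lt hmono hP fun n => hle n (P n)
  obtain ⟨q, hq⟩ := exists_isFusionLimit hlev hP hlt
  have hqP : ∀ n, FusionLe (lev n) q (P n).1 := hq.fusionLe hlev hmono hlt
  have hqnext n : FusionLe (lev (n + 1)) q (next n (P n)) := hqP (n + 1)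
  have hVlevel n w (hw : w ∈ V n (P n)) : ∀ l, w.2 l ≤ l := ((hD n).1 w (hVD n _ hw)).1
  exact ⟨q, fun n => V n (P n), isCondition_of_forall_fusionLe hI hlev hP hqP, hqP 0, fun n =>
    ⟨hVD n _, hVfin n _, hVcard n _,
      (hV n _).of_fusionLe (hmono n.le_succ) (hT n) (hVlevel n) (hqnext n)⟩⟩

/-! ### Predensity -/

theorem PredenseBelow.mono {W W' : Set Cond} (h : PredenseBelow I W p) (hW : W ⊆ W') :
    PredenseBelow I W' p := fun q hq hqp =>
  (h q hq hqp).imp fun _ => And.imp_left fun hw => hW hw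

theorem CondLe.exists_levelAmalg_condLe {T : Set ℕ} {r : Cond}
    (h : r ≼ amalg p.1 p.2 (T ∩ Set.Iic m) p.1) (hzero : ∀ l, p.2 l ≤ m → r.2 l = 0) :
    ∃ s, r ≼ levelAmalg m T s p := by
  classical
  let s : ℕ → ℕ → Bool := fun k i => if h : ∃ l, p.2 l = k then r.1 h.choose i else false
  have hs {l i} (hl : p.2 l ≤ m) (hT : p.2 l ∉ T) (hi : i < p.2 l) : s (p.2 l) i = r.1 l i := by
    have hex : ∃ l', p.2 l' = p.2 l := ⟨l, rfl⟩
    have hsnd : (amalg p.1 p.2 (T ∩ Set.Iic m) p.1).2 l = p.2 l :=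
      amalg_snd_of_notMem fun h => hT h.1
    simp only [s, dif_pos hex]
    exact (h.uniform (amalg_snd_congr hex.choose_spec.symm) ((hzero l hl).trans_le i.zero_le)
      (hi.trans_eq hsnd.symm)).symm
  have hsnd {l} (hl : m < p.2 l) : (amalg p.1 p.2 (T ∩ Set.Iic m) p.1).2 l = p.2 l :=
    amalg_snd_of_notMem fun h => hl.not_ge h.2
  have hagree {l i} (hi : p.2 l ∈ T ∩ Set.Iic m ∨ p.2 l ≤ i) (hil : i < l) :
      r.1 l i = p.1 l i := by
    rw [h.agree ?_ hil, amalg_self_fst]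
    rcases hi with hi | hi
    · exact (amalg_snd_of_mem hi).trans_le i.zero_le
    · exact (amalg_snd_le l).trans hi
  refine ⟨s, condLe_iff_levelwise.2 ⟨fun l => ?_, fun l i hi hil => ?_, fun l l' hl => ?_,
    fun l l' i hl hi hil => ?_⟩⟩
  · rw [levelAmalg_snd]
    split_ifs with hl
    · exact (hzero l hl).le
    · exact (h.level_le l).trans (amalg_snd_le l)
  · rcases le_or_gt (p.2 l) i with hpi | hpi
    · rw [levelAmalg_fst_of_le hpi, hagree (.inr hpi) hil]
    have hl : p.2 l ≤ m := by
      by_contra! hl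
      rw [levelAmalg_snd, if_neg hl.not_ge] at hi
      omega
    by_cases hT : p.2 l ∈ T
    · rw [levelAmalg_fst_of_mem hT, hagree (.inl ⟨hT, hl⟩) hil]
    · rw [levelAmalg_fst_of_notMem hT hl hpi, hs hl hT hpi]
  · rcases le_or_gt (p.2 l) m with hml | hml
    · have hml' : p.2 l' ≤ m := by
        rw [levelAmalg_snd, levelAmalg_snd] at hl
        split_ifs at hl <;> omega
      rw [hzero l hml, hzero l' hml']
    · exact h.level_congr (amalg_snd_congr (eq_of_levelAmalg_snd_eq hml hl))
  · obtain ⟨hml, hil'⟩ := lt_of_lt_levelAmalg_snd hil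
    exact h.uniform (amalg_snd_congr (eq_of_levelAmalg_snd_eq hml hl)) hi
      (hil'.trans_eq (hsnd hml).symm)

theorem Captures.predenseBelow {T : Set ℕ} {W : Set Cond} (hI : IsIdeal I)
    (hp : ∀ l, p.2 l ≤ l) (hWlevel : ∀ w ∈ W, ∀ l, w.2 l ≤ l) (hW : Captures m T W p) :
    PredenseBelow I W (amalg p.1 p.2 (T ∩ Set.Iic m) p.1) := by
  intro q hq hqp
  let r : Cond := amalg q.1 q.2 (Set.Iic m) fun _ _ => false
  have hr : IsCondition I r.1 r.2 :=
    hq.amalg hI (hI.preimage_mem_of_finite hq.2 (Set.finite_Iic m))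
  have hrq : r ≼ q := amalg_condLe fun _ _ _ _ _ _ => rfl
  have hrp := hrq.trans (fun l => (amalg_snd_le l).trans (hp l)) hqp
  have hzero l (hl : p.2 l ≤ m) : r.2 l = 0 :=
    amalg_snd_of_mem ((hqp.level_le l).trans ((amalg_snd_le l).trans hl))
  obtain ⟨s, hs⟩ := hrp.exists_levelAmalg_condLe hzero
  obtain ⟨w, hwW, hw⟩ := hW s
  exact ⟨w, hwW, r, hr, hrq, hs.trans (hWlevel w hwW) hw⟩

/-! ### The alternating fusion -/

/-- The levels of parity opposite to `n`. At stage `n` of the alternating fusion, which works at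
level `n - 1`, they are the levels whose rows are filled with the stored values. -/
def oppositeParity (n : ℕ) : Set ℕ :=
  {k | k % 2 ≠ n % 2}

theorem setOf_exists_le_even (j : ℕ) :
    {s | ∃ i ≤ j, s = 2 * i} = oppositeParity (2 * j + 1) ∩ Set.Iic (2 * j + 1 - 1) := by
  ext k
  simp only [oppositeParity, Set.mem_ofPred_eq, Set.mem_inter_iff, Set.mem_Iic]
  exact ⟨by rintro ⟨i, hi, rfl⟩; omega, fun h => ⟨k / 2, by omega, by omega⟩⟩

theorem setOf_exists_lt_odd (j : ℕ) :
    {s | ∃ i < j, s = 2 * i + 1} = oppositeParity (2 * j) ∩ Set.Iic (2 * j - 1) := by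
  ext k
  simp only [oppositeParity, Set.mem_ofPred_eq, Set.mem_inter_iff, Set.mem_Iic]
  exact ⟨by rintro ⟨i, hi, rfl⟩; omega, fun h => ⟨k / 2, by omega, by omega⟩⟩

theorem compl_setOf_even : {s | ∃ i, s = 2 * i}ᶜ = {s | ∃ i, s = 2 * i + 1} := by
  ext k
  simp only [Set.mem_compl_iff, Set.mem_ofPred_eq]
  exact ⟨fun h => ⟨k / 2, by_contra fun h' => h ⟨k / 2, by omega⟩⟩, by omega⟩

theorem sum_range_filter_mod_two_eq (n : ℕ) :
    ∑ k ∈ range n with k % 2 = n % 2, k = (n / 2) * ((n - 1) / 2) := by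
  induction n using Nat.twoStepInduction with
  | zero => rfl
  | one => rfl
  | more n ih _ =>
    have hn : (n + 2) % 2 = n % 2 := by omega
    have hn' : (n + 1) % 2 ≠ n % 2 := by omega
    simp only [Finset.sum_filter, Finset.sum_range_succ, hn, hn', if_true, if_false] at ih ⊢
    rcases n.eq_zero_or_pos with rfl | hpos
    · rfl
    have h1 : (n + 2) / 2 = n / 2 + 1 := by omega
    have h2 : (n + 2 - 1) / 2 = (n - 1) / 2 + 1 := by omega
    have h3 : n = n / 2 + (n - 1) / 2 + 1 := by omega
    rw [ih, h1, h2]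
    linarith

theorem exists_alternating_fusion {D : ℕ → Set Cond} (hI : IsIdeal I)
    (hD : ∀ n, IsDense I (D n)) (hp : IsCondition I p.1 p.2) :
    ∃ (q : Cond) (W : ℕ → Set Cond), IsCondition I q.1 q.2 ∧ FusionLe 0 q p ∧
      ∀ n, W n ⊆ D n ∧ (W n).Finite ∧ (W n).ncard ≤ 2 ^ ((n / 2) * ((n - 1) / 2)) ∧
        PredenseBelow I (W n) (amalg q.1 q.2 (oppositeParity n ∩ Set.Iic (n - 1)) q.1) := by
  classical
  obtain ⟨q, W, hq, hqp, hW⟩ := exists_fusion (lev := fun n => n - 1) (T := oppositeParity) hI hD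
    (fun _ _ h => Nat.sub_le_sub_right h 1) (fun k => ⟨k + 1, le_rfl⟩)
    (fun n (hn : 0 < n - 1) => by simp only [oppositeParity, Set.mem_ofPred_eq]; omega) hp
  have hexp n : ∑ k ∈ range (n - 1 + 1) with k ∉ oppositeParity n, k =
      (n / 2) * ((n - 1) / 2) := by
    rw [← sum_range_filter_mod_two_eq]
    rcases n with _ | n
    · simp [Finset.sum_filter]
    · simp only [oppositeParity, Set.mem_ofPred_eq, not_not, Nat.add_sub_cancel]
  refine ⟨q, W, hq, hqp, fun n => ?_⟩
  obtain ⟨hWD, hfin, hcard, hcapt⟩ := hW n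
  exact ⟨hWD, hfin, hcard.trans_eq (by rw [← hexp]),
    hcapt.predenseBelow hI hq.1 fun w hw => ((hD n).1 w (hWD hw)).1⟩

/-- Main fusion-amalgamation lemma (Lemma 2.7) for a maximal ideal `I`:
given a condition `τ` and dense sets `Dₙ`, there are `σ ≤ τ`, maps
`⃗g_j : dσ⁻¹{j} → 2^j` and finite sets `W_j` of conditions such that
`W_{2j} ∪ W_{2j+1} ⊆ D_j` with the stated cardinality bounds, `W_{2j} ∪ W_{2j+1}`
is predense below the finite even and odd amalgamations, and either the full even
amalgamation or the full odd amalgamation is a condition extending `τ`. -/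
theorem fusion_amalg (I : Set (Set ℕ)) (hI : IsMaximalIdeal I)
    (τ : ℕ → ℕ → Bool) (dτ : ℕ → ℕ) (hτ : IsCondition I τ dτ)
    (D : ℕ → Set Cond) (hD : ∀ n, IsDense I (D n)) :
    ∃ (σ : ℕ → ℕ → Bool) (dσ : ℕ → ℕ) (g : ℕ → ℕ → ℕ → Bool) (W : ℕ → Set Cond),
      IsCondition I σ dσ ∧ CondLe σ dσ τ dτ ∧
      (∀ j, W (2*j) ∪ W (2*j+1) ⊆ D j) ∧
      (∀ j, (W (2*j)).Finite ∧ (W (2*j)).ncard ≤ 2 ^ ((j-1)*(2*j))) ∧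
      (∀ j, (W (2*j+1)).Finite ∧ (W (2*j+1)).ncard ≤ 2 ^ (j*(2*j-1))) ∧
      (∀ j,
        IsCondition I
          (amalg σ dσ {s | ∃ i ≤ j, s = 2*i} (fun ℓ i => g (dσ ℓ) ℓ i)).1
          (amalg σ dσ {s | ∃ i ≤ j, s = 2*i} (fun ℓ i => g (dσ ℓ) ℓ i)).2 ∧
        IsCondition I
          (amalg σ dσ {s | ∃ i < j, s = 2*i+1} (fun ℓ i => g (dσ ℓ) ℓ i)).1
          (amalg σ dσ {s | ∃ i < j, s = 2*i+1} (fun ℓ i => g (dσ ℓ) ℓ i)).2 ∧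
        PredenseBelow I (W (2*j) ∪ W (2*j+1))
          (amalg σ dσ {s | ∃ i ≤ j, s = 2*i} (fun ℓ i => g (dσ ℓ) ℓ i)) ∧
        PredenseBelow I (W (2*j) ∪ W (2*j+1))
          (amalg σ dσ {s | ∃ i < j, s = 2*i+1} (fun ℓ i => g (dσ ℓ) ℓ i))) ∧
      ((IsCondition I
          (amalg σ dσ {s | ∃ i, s = 2*i} (fun ℓ i => g (dσ ℓ) ℓ i)).1
          (amalg σ dσ {s | ∃ i, s = 2*i} (fun ℓ i => g (dσ ℓ) ℓ i)).2 ∧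
        CondLe
          (amalg σ dσ {s | ∃ i, s = 2*i} (fun ℓ i => g (dσ ℓ) ℓ i)).1
          (amalg σ dσ {s | ∃ i, s = 2*i} (fun ℓ i => g (dσ ℓ) ℓ i)).2 τ dτ) ∨
       (IsCondition I
          (amalg σ dσ {s | ∃ i, s = 2*i+1} (fun ℓ i => g (dσ ℓ) ℓ i)).1
          (amalg σ dσ {s | ∃ i, s = 2*i+1} (fun ℓ i => g (dσ ℓ) ℓ i)).2 ∧
        CondLe
          (amalg σ dσ {s | ∃ i, s = 2*i+1} (fun ℓ i => g (dσ ℓ) ℓ i)).1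
          (amalg σ dσ {s | ∃ i, s = 2*i+1} (fun ℓ i => g (dσ ℓ) ℓ i)).2 τ dτ)) := by
  obtain ⟨q, W, hq, hqτ, hW⟩ :=
    exists_alternating_fusion (D := fun n => D (n / 2)) (p := (τ, dτ)) hI.1 (fun n => hD (n / 2)) hτ
  have hfin (n : ℕ) : q.2 ⁻¹' (oppositeParity n ∩ Set.Iic (n - 1)) ∈ I :=
    hI.1.preimage_mem_of_finite hq.2 ((Set.finite_Iic _).inter_of_right _)
  have hdiv (j : ℕ) : 2 * j / 2 = j ∧ (2 * j + 1) / 2 = j := by omega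
  refine ⟨q.1, q.2, fun _ => q.1, W, hq, hqτ.condLe, fun j => Set.union_subset ?_ ?_,
    fun j => ⟨(hW _).2.1, (hW _).2.2.1.trans (Nat.pow_le_pow_right two_pos ?_)⟩,
    fun j => ⟨(hW _).2.1, (hW _).2.2.1.trans (Nat.pow_le_pow_right two_pos ?_)⟩, fun j => ?_, ?_⟩
  · simpa only [hdiv] using (hW (2 * j)).1
  · simpa only [hdiv] using (hW (2 * j + 1)).1
  · rw [(hdiv j).1, mul_comm]
    exact Nat.mul_le_mul (by omega) (by omega)
  · rw [(hdiv j).2]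
    exact Nat.mul_le_mul le_rfl (by omega)
  · rw [setOf_exists_le_even, setOf_exists_lt_odd]
    exact ⟨hq.amalg hI.1 (hfin _), hq.amalg hI.1 (hfin _),
      (hW _).2.2.2.mono Set.subset_union_right, (hW _).2.2.2.mono Set.subset_union_left⟩
  · rw [← compl_setOf_even]
    refine (hI.2.2 (q.2 ⁻¹' {s | ∃ i, s = 2 * i})).imp (fun h => ?_) (fun h => ?_)
    · exact ⟨hq.amalg hI.1 h, hqτ.amalg_self_condLe _⟩
    · rw [← Set.compl_eq_univ_sdiff] at h
      exact ⟨hq.amalg hI.1 h, hqτ.amalg_self_condLe _⟩
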